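/- Let Q : ℂⁿ × ℂⁿ → ℂ be a polynomial function of its 2n complex variables (w, z) and define the holomorphic Laplacian ΔQ = Σ_{i=1}^n ∂²Q/∂w_i ∂z_i. Then for every z ∈ ℂⁿ the Gaussian average of the shifted polynomial equals the heat-operator action relating antinormal and normal symbols: π^{−n} ∫_{ℂⁿ} e^{−‖ζ‖²} Q( conj(z+ζ), z+ζ ) dζ = Σ_{m=0}^∞ (1/m!) (Δ^m Q)( conj(z), z ), where the sum on the right is finite since Q is a polynomial. -/

import Mathlib

/-!
Integrate the functions `F(y) = exp(-∑ᵢ wᵢ zᵢ) Q(x + y)` of `y = (w, z)`, holomorphic on `ℂ²ⁿ`,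
over the real subspace `{(conj ζ, ζ)}`. Derivatives along this subspace are combinations of the
holomorphic partial derivatives of `F`, and letting the direction vary over `ℂⁿ` one separates them,
so each `∂F/∂y_s` has integral zero. Writing `s'` for the variable paired with `s` (`wᵢ' = zᵢ`,
`zᵢ' = wᵢ`), this says that the Gaussian average `L` at the base point `x` satisfies the Wick
recursion `L(X_s Q) = x_s L(Q) + L(∂_s' Q)`. The value at `x` of the heat series satisfies the same
recursion because `[Δ, X_s] = ∂_s'` commutes with `Δ`, hence `[Δᵐ, X_s] = m Δᵐ⁻¹ ∂_s'`. Both fix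
constants, and the recursion lowers the degree, so they agree.
-/

open MeasureTheory
open scoped ComplexConjugate Real

/-- The holomorphic Laplacian `ΔQ = Σᵢ ∂²Q/∂wᵢ∂zᵢ` on polynomials in the `2n` variables
`(w, z)`, with the `w`-variables indexed by `Sum.inl` and the `z`-variables by `Sum.inr`. -/
noncomputable def holomorphicLaplacian {n : ℕ} (Q : MvPolynomial (Fin n ⊕ Fin n) ℂ) :
    MvPolynomial (Fin n ⊕ Fin n) ℂ :=
  ∑ i : Fin n, MvPolynomial.pderiv (Sum.inl i) (MvPolynomial.pderiv (Sum.inr i) Q)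

open MvPolynomial

theorem mvPolynomial_induction_on_pderiv {R σ : Type*} [CommSemiring R] (τ : σ → σ)
    {motive : MvPolynomial σ R → Prop} (const : ∀ a, motive (C a))
    (add : ∀ P Q, motive P → motive Q → motive (P + Q))
    (X_mul : ∀ i P, motive P → motive (pderiv (τ i) P) → motive (X i * P))
    (P : MvPolynomial σ R) : motive P := by
  induction P using MvPolynomial.induction_on' with
  | add P Q hP hQ => exact add P Q hP hQ
  | monomial s a =>
    induction s using WellFoundedLT.induction generalizing a with
    | _ s ih =>
      rcases eq_or_ne s 0 with rfl | hs
      · exact const a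
      obtain ⟨i, hi⟩ := Finsupp.ne_iff.mp hs
      obtain ⟨t, rfl⟩ : ∃ t, s = Finsupp.single i 1 + t :=
        exists_add_of_le (Finsupp.single_le_iff.mpr (Nat.one_le_iff_ne_zero.mpr hi))
      have ht : t < Finsupp.single i 1 + t := by simp [pos_iff_ne_zero]
      have := X_mul i (monomial t a) (ih t ht a) <| by
        rw [pderiv_monomial]
        exact ih _ (tsub_le_self.trans_lt ht) _
      rwa [X, monomial_mul, one_mul] at this

theorem pderiv_pderiv_comm {R σ : Type*} [CommSemiring R] (i j : σ) (P : MvPolynomial σ R) :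
    pderiv i (pderiv j P) = pderiv j (pderiv i P) := by
  classical
  induction P using MvPolynomial.induction_on with
  | C a => simp
  | add P Q hP hQ => simp [hP, hQ]
  | mul_X P k hP =>
    simp only [pderiv_mul, map_add, hP, pderiv_X, Pi.single_apply]
    split_ifs <;> simp [add_comm, add_left_comm]

theorem pow_succ_mul_eq_of_mul_eq_mul_add {A : Type*} [Semiring A] {a x d : A}
    (hx : a * x = x * a + d) (hd : Commute a d) (m : ℕ) :
    a ^ (m + 1) * x = x * a ^ (m + 1) + (m + 1) • (a ^ m * d) := by
  induction m with
  | zero => simp [hx]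
  | succ m ih =>
    calc a ^ (m + 2) * x = a * (a ^ (m + 1) * x) := by rw [pow_succ', mul_assoc]
      _ = (a * x) * a ^ (m + 1) + (m + 1) • (a ^ (m + 1) * d) := by
        rw [ih, mul_add, mul_smul_comm, ← mul_assoc, ← mul_assoc, ← pow_succ']
      _ = x * a ^ (m + 2) + (m + 2) • (a ^ (m + 1) * d) := by
        rw [hx, add_mul, mul_assoc, ← pow_succ', ← (hd.pow_left (m + 1)).eq, add_assoc,
          add_comm (_ * _) (_ • _), ← succ_nsmul]

section holomorphicLaplacian
variable {n : ℕ}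

/-- `holomorphicLaplacian` bundled as a linear map, so that its iterates become powers in the
endomorphism ring. -/
noncomputable def holomorphicLaplacianHom (n : ℕ) :
    Module.End ℂ (MvPolynomial (Fin n ⊕ Fin n) ℂ) where
  toFun := holomorphicLaplacian
  map_add' P Q := by simp [holomorphicLaplacian, Finset.sum_add_distrib]
  map_smul' a Q := by simp [holomorphicLaplacian, Finset.smul_sum]

theorem holomorphicLaplacianHom_apply (Q : MvPolynomial (Fin n ⊕ Fin n) ℂ) :
    holomorphicLaplacianHom n Q = holomorphicLaplacian Q :=
  rfl

theorem holomorphicLaplacianHom_pow_apply (m : ℕ) (Q : MvPolynomial (Fin n ⊕ Fin n) ℂ) :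
    (holomorphicLaplacianHom n ^ m) Q = holomorphicLaplacian^[m] Q :=
  Module.End.pow_apply ..

theorem holomorphicLaplacian_pderiv (s : Fin n ⊕ Fin n) (Q : MvPolynomial (Fin n ⊕ Fin n) ℂ) :
    holomorphicLaplacian (pderiv s Q) = pderiv s (holomorphicLaplacian Q) := by
  simp only [holomorphicLaplacian, map_sum, pderiv_pderiv_comm s]

theorem holomorphicLaplacian_X_mul (s : Fin n ⊕ Fin n) (Q : MvPolynomial (Fin n ⊕ Fin n) ℂ) :
    holomorphicLaplacian (X s * Q) = X s * holomorphicLaplacian Q + pderiv s.swap Q := by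
  classical
  rcases s with j | j
  · simp [holomorphicLaplacian, pderiv_X, Pi.single_apply, Finset.sum_add_distrib, Finset.mul_sum]
  · simp only [holomorphicLaplacian, pderiv_pderiv_comm (Sum.inl _) (Sum.inr _)]
    simp [pderiv_X, Pi.single_apply, Finset.sum_add_distrib, Finset.mul_sum]

theorem iterate_holomorphicLaplacian_X_mul (s : Fin n ⊕ Fin n)
    (Q : MvPolynomial (Fin n ⊕ Fin n) ℂ) (m : ℕ) :
    holomorphicLaplacian^[m + 1] (X s * Q) =
      X s * holomorphicLaplacian^[m + 1] Q +
        (m + 1) • holomorphicLaplacian^[m] (pderiv s.swap Q) := by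
  have key := pow_succ_mul_eq_of_mul_eq_mul_add (a := holomorphicLaplacianHom n)
    (x := LinearMap.mulLeft ℂ (X s)) (d := (pderiv s.swap).toLinearMap)
    (LinearMap.ext (holomorphicLaplacian_X_mul s))
    (LinearMap.ext (holomorphicLaplacian_pderiv s.swap)) m
  simp only [← holomorphicLaplacianHom_pow_apply]
  exact LinearMap.congr_fun key Q

/-- The `m`-th term of the series `∑ₘ (1/m!) (Δᵐ Q)(x)`, the value at `x` of `exp Δ` applied
to `Q`. -/
noncomputable def heatTerm (x : Fin n ⊕ Fin n → ℂ) (Q : MvPolynomial (Fin n ⊕ Fin n) ℂ)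
    (m : ℕ) : ℂ :=
  (m.factorial : ℂ)⁻¹ * eval x (holomorphicLaplacian^[m] Q)

theorem heatTerm_add (x : Fin n ⊕ Fin n → ℂ) (P Q : MvPolynomial (Fin n ⊕ Fin n) ℂ) (m : ℕ) :
    heatTerm x (P + Q) m = heatTerm x P m + heatTerm x Q m := by
  simp only [heatTerm, ← holomorphicLaplacianHom_pow_apply, map_add, mul_add]

theorem heatTerm_X_mul_zero (x : Fin n ⊕ Fin n → ℂ) (s : Fin n ⊕ Fin n)
    (Q : MvPolynomial (Fin n ⊕ Fin n) ℂ) : heatTerm x (X s * Q) 0 = x s * heatTerm x Q 0 := by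
  simp [heatTerm]

theorem heatTerm_X_mul_succ (x : Fin n ⊕ Fin n → ℂ) (s : Fin n ⊕ Fin n)
    (Q : MvPolynomial (Fin n ⊕ Fin n) ℂ) (m : ℕ) :
    heatTerm x (X s * Q) (m + 1) =
      x s * heatTerm x Q (m + 1) + heatTerm x (pderiv s.swap Q) m := by
  have : (m + 1 : ℂ) ≠ 0 := m.cast_add_one_ne_zero
  simp only [heatTerm, iterate_holomorphicLaplacian_X_mul, map_add, map_mul, eval_X, smul_eval,
    ← Nat.cast_smul_eq_nsmul ℂ, Nat.factorial_succ]
  push_cast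
  field_simp

theorem hasSum_heatTerm_C (x : Fin n ⊕ Fin n → ℂ) (a : ℂ) : HasSum (heatTerm x (C a)) a := by
  have h0 : heatTerm x (C a) 0 = a := by simp [heatTerm]
  have hsucc (m : ℕ) : heatTerm x (C a) (m + 1) = 0 := by
    have hC : holomorphicLaplacianHom n (C a) = 0 := by
      simp [holomorphicLaplacianHom_apply, holomorphicLaplacian]
    simp [heatTerm, ← holomorphicLaplacianHom_pow_apply, pow_succ, hC]
  simpa [h0] using hasSum_single (f := heatTerm x (C a)) 0 fun m hm => by
    obtain ⟨k, rfl⟩ := Nat.exists_eq_succ_of_ne_zero hm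
    exact hsucc k

theorem hasSum_heatTerm_X_mul {x : Fin n ⊕ Fin n → ℂ} {s : Fin n ⊕ Fin n}
    {Q : MvPolynomial (Fin n ⊕ Fin n) ℂ} {a b : ℂ} (ha : HasSum (heatTerm x Q) a)
    (hb : HasSum (heatTerm x (pderiv s.swap Q)) b) :
    HasSum (heatTerm x (X s * Q)) (x s * a + b) := by
  rw [← hasSum_nat_add_iff' 1, Finset.sum_range_one] at ha ⊢
  have hlimit : x s * a + b - heatTerm x (X s * Q) 0 = x s * (a - heatTerm x Q 0) + b := by
    rw [heatTerm_X_mul_zero]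
    ring
  simpa only [heatTerm_X_mul_succ, hlimit] using (ha.mul_left (x s)).add hb

end holomorphicLaplacian

theorem integrable_polynomial_eval_norm_mul_exp_neg_mul_norm_sq {E : Type*}
    [NormedAddCommGroup E] [NormedSpace ℝ E] [FiniteDimensional ℝ E] [Nontrivial E]
    [MeasurableSpace E] [BorelSpace E] (μ : Measure E) [μ.IsAddHaarMeasure]
    {b : ℝ} (hb : 0 < b) (p : Polynomial ℝ) :
    Integrable (fun x => p.eval ‖x‖ * Real.exp (-b * ‖x‖ ^ 2)) μ := by
  simp only [Polynomial.eval_eq_sum, Polynomial.sum, Finset.sum_mul, mul_assoc]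
  refine integrable_finsetSum _ fun k _ => Integrable.const_mul ?_ _
  refine (integrable_fun_norm_addHaar μ (f := fun r => r ^ k * Real.exp (-b * r ^ 2))).mpr ?_
  have hk : (-1 : ℝ) < (Module.finrank ℝ E - 1 + k : ℕ) := neg_one_lt_zero.trans_le (by positivity)
  simpa only [Real.rpow_natCast, pow_add, mul_assoc, smul_eq_mul] using
    integrableOn_rpow_mul_exp_neg_mul_sq hb hk

theorem integral_fderiv_apply_eq_zero {E F : Type*} [NormedAddCommGroup E] [NormedSpace ℝ E]
    [FiniteDimensional ℝ E] [MeasurableSpace E] [BorelSpace E] [NormedAddCommGroup F]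
    [NormedSpace ℝ F] {μ : Measure E} [μ.IsAddHaarMeasure] {f : E → F} {v : E}
    (hf : Differentiable ℝ f) (hfi : Integrable f μ)
    (hfi' : Integrable (fun x => fderiv ℝ f x v) μ) : ∫ x, fderiv ℝ f x v ∂μ = 0 := by
  simpa using integral_smul_fderiv_eq_neg_fderiv_smul_of_integrable (μ := μ) (v := v)
    (f := fun _ => (1 : ℝ)) (g := f) (by simp) (by simpa) (by simpa)
    (fun _ _ => differentiableAt_const _) fun x _ => hf x

theorem hasFDerivAt_mvPolynomial_eval {𝕜 σ : Type*} [NontriviallyNormedField 𝕜] [Fintype σ]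
    (Q : MvPolynomial σ 𝕜) (x : σ → 𝕜) :
    HasFDerivAt (fun y => eval y Q)
      (∑ s, eval x (pderiv s Q) • (ContinuousLinearMap.proj s : (σ → 𝕜) →L[𝕜] 𝕜)) x := by
  classical
  induction Q using MvPolynomial.induction_on with
  | C a =>
    simp only [eval_C]
    exact (hasFDerivAt_const a x).congr_fderiv (ContinuousLinearMap.ext fun v => by simp)
  | add P Q hP hQ =>
    simp only [map_add]
    refine (hP.fun_add hQ).congr_fderiv (ContinuousLinearMap.ext fun v => ?_)
    simp [add_mul, Finset.sum_add_distrib]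
  | mul_X P i hP =>
    simp only [map_mul, eval_X]
    refine (hP.fun_mul (hasFDerivAt_apply i x)).congr_fderiv (ContinuousLinearMap.ext fun v => ?_)
    simp [pderiv_X, Pi.single_apply, apply_ite (eval x), add_mul, Finset.sum_add_distrib,
      Finset.mul_sum, mul_assoc]

section conjGraph
variable {ι : Type*}

/-- The real-linear embedding `ζ ↦ (conj ζ, ζ)` of `ℂ^ι` into `ℂ^ι × ℂ^ι`, with the coordinates
of the target ordered as the variables `(w, z)`. -/
noncomputable def conjGraph (ι : Type*) : (ι → ℂ) →L[ℝ] (ι ⊕ ι → ℂ) :=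
  ContinuousLinearMap.pi <| Sum.elim
    (fun i => Complex.conjCLE.toContinuousLinearMap ∘L ContinuousLinearMap.proj i)
    (fun i => ContinuousLinearMap.proj i)

@[simp]
theorem conjGraph_inl (ζ : ι → ℂ) (i : ι) : conjGraph ι ζ (Sum.inl i) = conj (ζ i) := rfl

@[simp]
theorem conjGraph_inr (ζ : ι → ℂ) (i : ι) : conjGraph ι ζ (Sum.inr i) = ζ i := rfl

theorem conjGraph_single [DecidableEq ι] (i : ι) (c : ℂ) :
    conjGraph ι (Pi.single i c) =
      conj c • Pi.single (Sum.inl i) 1 + c • Pi.single (Sum.inr i) 1 := by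
  ext (j | j) <;> by_cases h : j = i <;> simp [h]

theorem eq_zero_and_eq_zero_of_forall_conj_mul_add_mul_eq_zero {a b : ℂ}
    (h : ∀ c : ℂ, conj c * a + c * b = 0) : a = 0 ∧ b = 0 := by
  have h1 := h 1
  have hI := h Complex.I
  simp only [map_one, Complex.conj_I] at h1 hI
  constructor
  · linear_combination (h1 + Complex.I * hI) / 2 + (a - b) / 2 * Complex.I_sq
  · linear_combination (h1 - Complex.I * hI) / 2 - (a - b) / 2 * Complex.I_sq

variable [Fintype ι] [DecidableEq ι]

theorem integral_fderiv_conjGraph_single_eq_zero {F : (ι ⊕ ι → ℂ) → ℂ} (hF : Differentiable ℂ F)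
    (hi : Integrable fun ζ => F (conjGraph ι ζ))
    (hi' : ∀ s, Integrable fun ζ => fderiv ℂ F (conjGraph ι ζ) (Pi.single s 1)) (s : ι ⊕ ι) :
    ∫ ζ, fderiv ℂ F (conjGraph ι ζ) (Pi.single s 1) = 0 := by
  have hderiv (ζ : ι → ℂ) : HasFDerivAt (fun ζ => F (conjGraph ι ζ))
      ((fderiv ℂ F (conjGraph ι ζ)).restrictScalars ℝ ∘L conjGraph ι) ζ :=
    ((hF _).hasFDerivAt.restrictScalars ℝ).comp ζ (conjGraph ι).hasFDerivAt
  have hsingle (i : ι) (c : ℂ) (ζ : ι → ℂ) :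
      fderiv ℝ (fun ζ => F (conjGraph ι ζ)) ζ (Pi.single i c) =
        conj c * fderiv ℂ F (conjGraph ι ζ) (Pi.single (Sum.inl i) 1) +
          c * fderiv ℂ F (conjGraph ι ζ) (Pi.single (Sum.inr i) 1) := by
    simp [(hderiv ζ).fderiv, conjGraph_single]
  have hzero (i : ι) (c : ℂ) :
      conj c * (∫ ζ, fderiv ℂ F (conjGraph ι ζ) (Pi.single (Sum.inl i) 1)) +
        c * (∫ ζ, fderiv ℂ F (conjGraph ι ζ) (Pi.single (Sum.inr i) 1)) = 0 := by
    have hl := (hi' (Sum.inl i)).const_mul (conj c)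
    have hr := (hi' (Sum.inr i)).const_mul c
    rw [← integral_const_mul, ← integral_const_mul, ← integral_add hl hr]
    simp only [← hsingle]
    exact integral_fderiv_apply_eq_zero (fun ζ => (hderiv ζ).differentiableAt) hi
      (by simpa only [hsingle] using! hl.add hr)
  rcases s with i | i
  · exact (eq_zero_and_eq_zero_of_forall_conj_mul_add_mul_eq_zero (hzero i)).1
  · exact (eq_zero_and_eq_zero_of_forall_conj_mul_add_mul_eq_zero (hzero i)).2

end conjGraph

section gaussianAverage
variable {ι : Type*} [Fintype ι]

/-- The polynomial `∑ᵢ wᵢ zᵢ`, whose value at `(conj ζ, ζ)` is `‖ζ‖²`. -/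
noncomputable def conjPairing (ι : Type*) [Fintype ι] : MvPolynomial (ι ⊕ ι) ℂ :=
  ∑ i, X (Sum.inl i) * X (Sum.inr i)

theorem eval_conjGraph_conjPairing (ζ : ι → ℂ) :
    eval (conjGraph ι ζ) (conjPairing ι) = ((∑ i, Complex.normSq (ζ i) : ℝ) : ℂ) := by
  simp [conjPairing, Complex.normSq_eq_conj_mul_self]

theorem pderiv_conjPairing (s : ι ⊕ ι) : pderiv s (conjPairing ι) = X s.swap := by
  classical
  rcases s with i | i <;> simp [conjPairing, pderiv_X, Pi.single_apply]

theorem hasFDerivAt_exp_neg_conjPairing_mul_eval (x : ι ⊕ ι → ℂ) (Q : MvPolynomial (ι ⊕ ι) ℂ)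
    (y : ι ⊕ ι → ℂ) :
    HasFDerivAt (fun y => Complex.exp (-eval y (conjPairing ι)) * eval (x + y) Q)
      (∑ s, (Complex.exp (-eval y (conjPairing ι)) *
        eval (x + y) (pderiv s Q + (C (x s.swap) - X s.swap) * Q)) •
          (ContinuousLinearMap.proj s : (ι ⊕ ι → ℂ) →L[ℂ] ℂ)) y := by
  have hexp := (hasFDerivAt_mvPolynomial_eval (conjPairing ι) y).fun_neg.cexp
  have heval := (hasFDerivAt_mvPolynomial_eval Q (x + y)).comp y ((hasFDerivAt_id y).const_add x)
  refine (hexp.fun_mul heval).congr_fderiv (ContinuousLinearMap.ext fun v => ?_)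
  simp only [pderiv_conjPairing, ContinuousLinearMap.comp_id, Function.comp_apply,
    ← Finset.sum_neg_distrib, add_apply, smul_apply, sum_apply, neg_apply, smul_eq_mul,
    ContinuousLinearMap.proj_apply, Finset.mul_sum, ← Finset.sum_add_distrib, map_add, map_mul,
    map_sub, eval_C, eval_X, Pi.add_apply]
  refine Finset.sum_congr rfl fun s _ => ?_
  ring

theorem integrable_exp_neg_normSq_mul_pow_mul_pow (w z : ℂ) (a b : ℕ) :
    Integrable fun ζ : ℂ =>
      Complex.exp (-(Complex.normSq ζ : ℂ)) * ((w + conj ζ) ^ a * (z + ζ) ^ b) := by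
  let p : Polynomial ℝ := (.C ‖w‖ + .X) ^ a * (.C ‖z‖ + .X) ^ b
  have hp := integrable_polynomial_eval_norm_mul_exp_neg_mul_norm_sq
    (volume : Measure ℂ) one_pos p
  refine hp.mono' (by fun_prop) (.of_forall fun ζ => ?_)
  have hw : ‖w + conj ζ‖ ≤ ‖w‖ + ‖ζ‖ := by simpa using norm_add_le w (conj ζ)
  have hz : ‖z + ζ‖ ≤ ‖z‖ + ‖ζ‖ := norm_add_le z ζ
  calc
    _ = Real.exp (-‖ζ‖ ^ 2) * (‖w + conj ζ‖ ^ a * ‖z + ζ‖ ^ b) := by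
      simp [Complex.norm_exp, ← Complex.normSq_eq_norm_sq]
    _ ≤ Real.exp (-‖ζ‖ ^ 2) * ((‖w‖ + ‖ζ‖) ^ a * (‖z‖ + ‖ζ‖) ^ b) := by gcongr
    _ = p.eval ‖ζ‖ * Real.exp (-1 * ‖ζ‖ ^ 2) := by simp [p, mul_comm]

theorem integrable_exp_neg_conjPairing_mul_eval (x : ι ⊕ ι → ℂ) (Q : MvPolynomial (ι ⊕ ι) ℂ) :
    Integrable fun ζ : ι → ℂ => Complex.exp (-eval (conjGraph ι ζ) (conjPairing ι)) *
      eval (x + conjGraph ι ζ) Q := by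
  simp only [eval_eq' _ Q, Finset.mul_sum, mul_left_comm _ (coeff _ Q)]
  refine integrable_finsetSum _ fun d _ => Integrable.const_mul ?_ _
  refine (Integrable.fintype_prod fun i => integrable_exp_neg_normSq_mul_pow_mul_pow
    (x (Sum.inl i)) (x (Sum.inr i)) (d (Sum.inl i)) (d (Sum.inr i))).congr (.of_forall fun ζ => ?_)
  simp [eval_conjGraph_conjPairing, Complex.exp_sum, Finset.prod_mul_distrib,
    ← Finset.sum_neg_distrib]

/-- The Gaussian average `π⁻ⁿ ∫ e^{-‖ζ‖²} Q(x + (conj ζ, ζ)) dζ`, with an arbitrary base point `x`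
in `ℂⁿ × ℂⁿ`. -/
noncomputable def gaussianAverage (x : ι ⊕ ι → ℂ) (Q : MvPolynomial (ι ⊕ ι) ℂ) : ℂ :=
  ((π : ℂ) ^ Fintype.card ι)⁻¹ *
    ∫ ζ : ι → ℂ, Complex.exp (-eval (conjGraph ι ζ) (conjPairing ι)) * eval (x + conjGraph ι ζ) Q

theorem gaussianAverage_C (x : ι ⊕ ι → ℂ) (a : ℂ) : gaussianAverage x (C a) = a := by
  have hone : ∫ ζ : ℂ, Complex.exp (-(Complex.normSq ζ : ℂ)) = π := by
    simpa [Complex.normSq_eq_norm_sq] using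
      GaussianFourier.integral_cexp_neg_mul_sq_norm (V := ℂ) (b := 1) (by simp)
  have hprod : ∫ ζ : ι → ℂ, Complex.exp (-eval (conjGraph ι ζ) (conjPairing ι)) =
      (π : ℂ) ^ Fintype.card ι := by
    rw [← hone, ← integral_fintype_prod_volume_eq_pow]
    simp [eval_conjGraph_conjPairing, Complex.exp_sum, ← Finset.sum_neg_distrib]
  simp only [gaussianAverage, eval_C, integral_mul_const, hprod]
  field_simp

theorem gaussianAverage_add (x : ι ⊕ ι → ℂ) (P Q : MvPolynomial (ι ⊕ ι) ℂ) :
    gaussianAverage x (P + Q) = gaussianAverage x P + gaussianAverage x Q := by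
  simp only [gaussianAverage, map_add, mul_add]
  rw [integral_add (integrable_exp_neg_conjPairing_mul_eval x P)
    (integrable_exp_neg_conjPairing_mul_eval x Q), mul_add]

theorem gaussianAverage_smul (x : ι ⊕ ι → ℂ) (a : ℂ) (Q : MvPolynomial (ι ⊕ ι) ℂ) :
    gaussianAverage x (a • Q) = a * gaussianAverage x Q := by
  simp only [gaussianAverage, smul_eval, mul_left_comm _ a, integral_const_mul]

theorem gaussianAverage_pderiv_add_sub_mul_eq_zero (x : ι ⊕ ι → ℂ) (s : ι ⊕ ι)
    (Q : MvPolynomial (ι ⊕ ι) ℂ) :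
    gaussianAverage x (pderiv s Q + (C (x s.swap) - X s.swap) * Q) = 0 := by
  classical
  have hderiv := hasFDerivAt_exp_neg_conjPairing_mul_eval x Q
  have hpartial (s : ι ⊕ ι) (y : ι ⊕ ι → ℂ) :
      fderiv ℂ (fun y => Complex.exp (-eval y (conjPairing ι)) * eval (x + y) Q) y
          (Pi.single s 1) =
        Complex.exp (-eval y (conjPairing ι)) *
          eval (x + y) (pderiv s Q + (C (x s.swap) - X s.swap) * Q) := by
    rw [(hderiv y).fderiv]
    simp [-map_add, -Fintype.sum_sum_type, Pi.single_apply]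
  have hzero := integral_fderiv_conjGraph_single_eq_zero
    (fun y => (hderiv y).differentiableAt) (integrable_exp_neg_conjPairing_mul_eval x Q)
    (fun s => by simpa only [hpartial] using integrable_exp_neg_conjPairing_mul_eval x _) s
  simp only [hpartial] at hzero
  rw [gaussianAverage, hzero, mul_zero]

theorem gaussianAverage_X_mul (x : ι ⊕ ι → ℂ) (s : ι ⊕ ι) (Q : MvPolynomial (ι ⊕ ι) ℂ) :
    gaussianAverage x (X s * Q) =
      x s * gaussianAverage x Q + gaussianAverage x (pderiv s.swap Q) := by
  have hsplit : x s • Q + pderiv s.swap Q =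
      (pderiv s.swap Q + (C (x s) - X s) * Q) + X s * Q := by
    rw [smul_eq_C_mul]
    ring
  have hzero := gaussianAverage_pderiv_add_sub_mul_eq_zero x s.swap Q
  rw [Sum.swap_swap] at hzero
  rw [← gaussianAverage_smul, ← gaussianAverage_add, hsplit, gaussianAverage_add, hzero, zero_add]

end gaussianAverage

theorem gaussian_average_eq_heat_operator_general {n : ℕ} (Q : MvPolynomial (Fin n ⊕ Fin n) ℂ)
    (x : Fin n ⊕ Fin n → ℂ) : HasSum (heatTerm x Q) (gaussianAverage x Q) := by
  induction Q using mvPolynomial_induction_on_pderiv Sum.swap with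
  | const a => simpa only [gaussianAverage_C] using hasSum_heatTerm_C x a
  | add P Q hP hQ =>
    simpa only [gaussianAverage_add, funext (heatTerm_add x P Q)] using hP.add hQ
  | X_mul s Q hQ hQ' => simpa only [gaussianAverage_X_mul] using hasSum_heatTerm_X_mul hQ hQ'

/-- for a polynomial `Q(w, z)` of `2n` complex variables and any `z ∈ ℂⁿ`,
`π^{−n} ∫_{ℂⁿ} e^{−‖ζ‖²} Q(conj(z+ζ), z+ζ) dζ = Σ_{m=0}^∞ (1/m!) (Δ^m Q)(conj z, z)`
(the heat-operator relation between antinormal and normal symbols); the series on the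
right has only finitely many nonzero terms since `Q` is a polynomial. -/
theorem gaussian_average_eq_heat_operator {n : ℕ}
    (Q : MvPolynomial (Fin n ⊕ Fin n) ℂ) (z : Fin n → ℂ) :
    ((π : ℂ) ^ n)⁻¹ *
        ∫ ζ : Fin n → ℂ,
          Complex.exp (-((∑ i, Complex.normSq (ζ i) : ℝ) : ℂ)) *
            MvPolynomial.eval
              (Sum.elim (fun i => conj (z i + ζ i)) (fun i => z i + ζ i)) Q =
      ∑' m : ℕ, ((Nat.factorial m : ℂ))⁻¹ *
        MvPolynomial.eval (Sum.elim (fun i => conj (z i)) (fun i => z i))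
          (holomorphicLaplacian^[m] Q) := by
  have hpoint (ζ : Fin n → ℂ) :
      Sum.elim (fun i => conj (z i + ζ i)) (fun i => z i + ζ i) =
        Sum.elim (fun i => conj (z i)) z + conjGraph (Fin n) ζ := by
    ext (i | i) <;> simp
  simpa only [gaussianAverage, heatTerm, eval_conjGraph_conjPairing, Fintype.card_fin, hpoint] using
    (gaussian_average_eq_heat_operator_general Q (Sum.elim (fun i => conj (z i)) z)).tsum_eq.symm
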